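/- Let t : ℕ → ℝ satisfy t(0) = 0 and t(k)/k → μ as k → ∞ for some μ > 0, and let ζ ∈ (0,1). Then there exist α > 0 and C > 0 such that for every N ∈ ℕ and every m : ℕ → ℝ satisfying 0 ≤ m(k) ≤ exp(t(k+1) − t(k)) for all k ≤ N, one has ∑_{k=0}^{N} m(k)·exp((1−ζ)·t(k)) ≤ C·exp((1−α)·t(N)). -/

import Mathlib

open Filter

lemma stmt5_aux (t : ℕ → ℝ) (μ : ℝ)
    (hfreq : Tendsto (fun k : ℕ => t k / (k : ℝ)) atTop (nhds μ)) (δ : ℝ) (hδ : 0 < δ) :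
    ∃ B : ℝ, 0 ≤ B ∧ ∀ k : ℕ, |t k - μ * k| ≤ δ * k + B := by
  obtain ⟨K, hK⟩ := (Metric.tendsto_atTop.mp hfreq) δ hδ
  refine ⟨∑ k ∈ Finset.range (K+1), |t k - μ * k|,
    Finset.sum_nonneg (fun _ _ => abs_nonneg _), fun k => ?_⟩
  have hS : 0 ≤ ∑ k ∈ Finset.range (K+1), |t k - μ * k| :=
    Finset.sum_nonneg (fun _ _ => abs_nonneg _)
  by_cases hk : k < K + 1
  · have h1 := Finset.single_le_sum (f := fun k : ℕ => |t k - μ * k|)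
      (fun i _ => abs_nonneg _) (Finset.mem_range.mpr hk)
    have h2 : 0 ≤ δ * (k:ℝ) := by positivity
    linarith
  · have hk0 : (0:ℝ) < k := by
      have : 0 < k := by omega
      exact_mod_cast this
    have h := hK k (by omega)
    rw [Real.dist_eq] at h
    have h3 : t k - μ * k = (t k / k - μ) * k := by field_simp
    rw [h3, abs_mul, abs_of_pos hk0]
    have := mul_le_mul_of_nonneg_right h.le hk0.le
    linarith

/-- Summation estimate in the fifth step of the proof of the effective Veech criterion:
if the return times `t k` satisfy `t 0 = 0` and `t k / k → μ > 0`, and `ζ ∈ (0,1)`, then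
there are `α > 0` and `C > 0` such that any Ostrowski-type sum
`∑_{k=0}^{N} m k · exp((1-ζ)·t k)` with `0 ≤ m k ≤ exp(t (k+1) - t k)` is bounded by
`C · exp((1-α)·t N)`. -/
theorem stmt5 (t : ℕ → ℝ) (ht0 : t 0 = 0) (μ : ℝ) (hμ : 0 < μ)
    (hfreq : Tendsto (fun k : ℕ => t k / (k : ℝ)) atTop (nhds μ))
    (ζ : ℝ) (hζ : ζ ∈ Set.Ioo (0:ℝ) 1) :
    ∃ α > (0:ℝ), ∃ C > (0:ℝ), ∀ N : ℕ, ∀ m : ℕ → ℝ,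
      (∀ k ≤ N, 0 ≤ m k ∧ m k ≤ Real.exp (t (k+1) - t k)) →
      ∑ k ∈ Finset.range (N+1), m k * Real.exp ((1 - ζ) * t k) ≤
        C * Real.exp ((1 - α) * t N) := by
  obtain ⟨hz0, hz1⟩ := hζ
  obtain ⟨δ, hδd⟩ : ∃ δ, δ = ζ * μ / 8 := ⟨_, rfl⟩
  have hδ : 0 < δ := by rw [hδd]; positivity
  obtain ⟨B, hB0, hB⟩ := stmt5_aux t μ hfreq δ hδ
  refine ⟨ζ / 2, by positivity, (1 + 1/δ) * Real.exp (μ + δ + 3 * B), by positivity, ?_⟩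
  intro N m hm
  have hr : 0 ≤ (1 - ζ) * μ + 2 * δ := by
    have : 0 ≤ (1 - ζ) * μ := mul_nonneg (by linarith) hμ.le
    linarith
  have hterm : ∀ k ∈ Finset.range (N+1), m k * Real.exp ((1 - ζ) * t k) ≤
      Real.exp (((1 - ζ) * μ + 2 * δ) * N + (μ + δ + 2 * B)) := by
    intro k hk
    have hkN : k ≤ N := by
      have := Finset.mem_range.mp hk
      omega
    have hkN' : (k:ℝ) ≤ N := by exact_mod_cast hkN
    calc m k * Real.exp ((1 - ζ) * t k)
        ≤ Real.exp (t (k+1) - t k) * Real.exp ((1 - ζ) * t k) :=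
          mul_le_mul_of_nonneg_right (hm k hkN).2 (Real.exp_pos _).le
      _ = Real.exp (t (k+1) - ζ * t k) := by rw [← Real.exp_add]; congr 1; ring
      _ ≤ _ := by
        apply Real.exp_le_exp.mpr
        have h1 := (abs_le.mp (hB (k+1))).2
        have h2 := (abs_le.mp (hB k)).1
        push_cast at h1
        have h3 := mul_le_mul_of_nonneg_left h2 hz0.le
        have h4 := mul_le_mul_of_nonneg_left hkN' hr
        have h5 : 0 ≤ (1 - ζ) * (δ * k + B) := mul_nonneg (by linarith) (by positivity)
        linarith
  have hsum := Finset.sum_le_card_nsmul _ _ _ hterm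
  rw [Finset.card_range, nsmul_eq_mul] at hsum
  have hN : ((N+1 : ℕ) : ℝ) ≤ (1 + 1/δ) * Real.exp (δ * N) := by
    have h1 := Real.add_one_le_exp (δ * N)
    have h2 : (1 + 1/δ) * (δ * N + 1) ≤ (1 + 1/δ) * Real.exp (δ * N) :=
      mul_le_mul_of_nonneg_left h1 (by positivity)
    have h3 : (1 + 1/δ) * (δ * N + 1) = N + 1 + (δ * N + 1/δ) := by field_simp; ring
    have h4 : 0 ≤ δ * N + 1/δ := by positivity
    push_cast
    linarith
  refine hsum.trans ((mul_le_mul_of_nonneg_right hN (Real.exp_pos _).le).trans ?_)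
  rw [mul_assoc, mul_assoc, ← Real.exp_add, ← Real.exp_add]
  apply mul_le_mul_of_nonneg_left _ (by positivity)
  apply Real.exp_le_exp.mpr
  have h2 := (abs_le.mp (hB N)).1
  have h3 := mul_le_mul_of_nonneg_left h2 (by linarith : (0:ℝ) ≤ 1 - ζ/2)
  have h5 : 0 ≤ ζ / 2 * (δ * N + B) := by positivity
  have h6 : δ * N = ζ * μ / 8 * N := by rw [hδd]
  linarith
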